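/- Assume conditions (i)–(iii) hold, f is convolution invertible with inverse f^{-1}, and f (hence f^{-1}) takes its values in k·1_A. Then in the crossed product E = A #_f H, for all h, l ∈ H one has γ^{-1}(h) γ^{-1}(l) = f^{-1}(S(l^{(2)} h^{(2)}), l^{(3)} h^{(3)}) f^{-1}(l^{(4)}, h^{(4)}) γ(S(l^{(1)} h^{(1)})). -/

import Mathlib

open TensorProduct

noncomputable section CrossedProduct

variable (k A H : Type*) [CommRing k] [Ring A] [Algebra k A] [Ring H] [HopfAlgebra k H]

/-- A chosen "Sweedler representation" of the comultiplication of `H`: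
`comul h = ∑_{i < n h} c₁ h i ⊗ c₂ h i` for every `h`. -/
def IsSweedlerRep (n : H → ℕ) (c₁ c₂ : H → ℕ → H) : Prop :=
  ∀ h : H, Coalgebra.comul (R := k) h = ∑ i ∈ Finset.range (n h), c₁ h i ⊗ₜ[k] c₂ h i

/-- `σ` is a weak action of `H` on `A`: `(ab)^h = a^{h⁽¹⁾} b^{h⁽²⁾}`, `1^h = ε(h)1`, `a^1 = a`. -/
def IsWeakAction (n : H → ℕ) (c₁ c₂ : H → ℕ → H) (σ : H →ₗ[k] A →ₗ[k] A) : Prop :=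
  (∀ (h : H) (a b : A),
      σ h (a * b) = ∑ i ∈ Finset.range (n h), σ (c₁ h i) a * σ (c₂ h i) b) ∧
  (∀ h : H, σ h (1 : A) = Coalgebra.counit (R := k) h • (1 : A)) ∧
  (∀ a : A, σ (1 : H) a = a)

/-- Condition (i): normality of the cocycle `f`. -/
def IsNormal (f : H →ₗ[k] H →ₗ[k] A) : Prop :=
  ∀ h : H, f h (1 : H) = Coalgebra.counit (R := k) h • (1 : A) ∧
    f (1 : H) h = Coalgebra.counit (R := k) h • (1 : A)

/-- Condition (ii): the cocycle condition
`f(l⁽¹⁾,m⁽¹⁾)^{h⁽¹⁾} f(h⁽²⁾, l⁽²⁾m⁽²⁾) = f(h⁽¹⁾,l⁽¹⁾) f(h⁽²⁾l⁽²⁾, m)`. -/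
def IsCocycle (n : H → ℕ) (c₁ c₂ : H → ℕ → H) (σ : H →ₗ[k] A →ₗ[k] A)
    (f : H →ₗ[k] H →ₗ[k] A) : Prop :=
  ∀ h l m : H,
    (∑ i ∈ Finset.range (n h), ∑ j ∈ Finset.range (n l), ∑ p ∈ Finset.range (n m),
      σ (c₁ h i) (f (c₁ l j) (c₁ m p)) * f (c₂ h i) (c₂ l j * c₂ m p)) =
    ∑ i ∈ Finset.range (n h), ∑ j ∈ Finset.range (n l),
      f (c₁ h i) (c₁ l j) * f (c₂ h i * c₂ l j) m

/-- Condition (iii): the twisted module condition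
`(a^{l⁽¹⁾})^{h⁽¹⁾} f(h⁽²⁾,l⁽²⁾) = f(h⁽¹⁾,l⁽¹⁾) a^{h⁽²⁾l⁽²⁾}`. -/
def IsTwistedModule (n : H → ℕ) (c₁ c₂ : H → ℕ → H) (σ : H →ₗ[k] A →ₗ[k] A)
    (f : H →ₗ[k] H →ₗ[k] A) : Prop :=
  ∀ (h l : H) (a : A),
    (∑ i ∈ Finset.range (n h), ∑ j ∈ Finset.range (n l),
      σ (c₁ h i) (σ (c₁ l j) a) * f (c₂ h i) (c₂ l j)) =
    ∑ i ∈ Finset.range (n h), ∑ j ∈ Finset.range (n l),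
      f (c₁ h i) (c₁ l j) * σ (c₂ h i * c₂ l j) a

/-- `finv` is the convolution inverse of `f`:
`f(h⁽¹⁾,l⁽¹⁾) f⁻¹(h⁽²⁾,l⁽²⁾) = f⁻¹(h⁽¹⁾,l⁽¹⁾) f(h⁽²⁾,l⁽²⁾) = ε(h)ε(l)1_A`. -/
def IsConvInverse (n : H → ℕ) (c₁ c₂ : H → ℕ → H) (f finv : H →ₗ[k] H →ₗ[k] A) : Prop :=
  ∀ h l : H,
    (∑ i ∈ Finset.range (n h), ∑ j ∈ Finset.range (n l),
        f (c₁ h i) (c₁ l j) * finv (c₂ h i) (c₂ l j) =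
      (Coalgebra.counit (R := k) h * Coalgebra.counit (R := k) l) • (1 : A)) ∧
    (∑ i ∈ Finset.range (n h), ∑ j ∈ Finset.range (n l),
        finv (c₁ h i) (c₁ l j) * f (c₂ h i) (c₂ l j) =
      (Coalgebra.counit (R := k) h * Coalgebra.counit (R := k) l) • (1 : A))

/-- The multiplication of `A #_f H` as a bilinear map on `A ⊗[k] H`:
`(a # h)(b # l) = a b^{h⁽¹⁾} f(h⁽²⁾, l⁽¹⁾) # h⁽³⁾ l⁽²⁾`. -/
def crossedMul (σ : H →ₗ[k] A →ₗ[k] A) (f : H →ₗ[k] H →ₗ[k] A) :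
    (A ⊗[k] H) →ₗ[k] (A ⊗[k] H) →ₗ[k] (A ⊗[k] H) :=
  TensorProduct.lift
    (((LinearMap.llcomp k (A ⊗[k] H) (A ⊗[k] H) (A ⊗[k] H)).comp
        (TensorProduct.curry
          ((LinearMap.rTensor H (LinearMap.mul' k A)) ∘ₗ
            (TensorProduct.assoc k A A H).symm.toLinearMap))).compl₂
      (TensorProduct.curry
        ((LinearMap.rTensor H (LinearMap.mul' k A)) ∘ₗ
         (TensorProduct.map
            (TensorProduct.map (TensorProduct.lift σ) (TensorProduct.lift f))
            (LinearMap.mul' k H)) ∘ₗ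
         (LinearMap.rTensor (H ⊗[k] H)
            (TensorProduct.tensorTensorTensorComm k H H A H).toLinearMap) ∘ₗ
         (TensorProduct.tensorTensorTensorComm k (H ⊗[k] H) H (A ⊗[k] H) H).toLinearMap ∘ₗ
         (TensorProduct.map
            ((LinearMap.rTensor H (Coalgebra.comul (R := k))) ∘ₗ (Coalgebra.comul (R := k)))
            ((TensorProduct.assoc k A H H).symm.toLinearMap ∘ₗ
              (LinearMap.lTensor A (Coalgebra.comul (R := k))))))))

/-- The unit `1 # 1` of the crossed product. -/
def oneE : A ⊗[k] H := (1 : A) ⊗ₜ[k] (1 : H)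

/-- The map `γ : H → A #_f H`, `γ(h) = 1 # h`. -/
def gam : H →ₗ[k] A ⊗[k] H := TensorProduct.mk k A H 1

/-- The map `h ↦ f⁻¹(S(h⁽²⁾), h⁽³⁾) # S(h⁽¹⁾)`, the convolution inverse of `γ`. -/
def gammaInv (finv : H →ₗ[k] H →ₗ[k] A) : H →ₗ[k] A ⊗[k] H :=
  (TensorProduct.comm k H A).toLinearMap ∘ₗ
    (TensorProduct.map (HopfAlgebra.antipode (R := k))
      ((TensorProduct.lift finv) ∘ₗ (LinearMap.rTensor H (HopfAlgebra.antipode (R := k))))) ∘ₗ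
    (LinearMap.lTensor H (Coalgebra.comul (R := k))) ∘ₗ (Coalgebra.comul (R := k))

/-- The canonical coaction `ν = id_A ⊗ Δ : A #_f H → (A #_f H) ⊗ H`. -/
def nuE : (A ⊗[k] H) →ₗ[k] (A ⊗[k] H) ⊗[k] H :=
  (TensorProduct.assoc k A H H).symm.toLinearMap ∘ₗ
    (LinearMap.lTensor A (Coalgebra.comul (R := k)))

/-- Convolution product on `Hom_k(H, A #_f H)`: `(u * v)(h) = u(h⁽¹⁾) v(h⁽²⁾)`. -/
def convMul (σ : H →ₗ[k] A →ₗ[k] A) (f : H →ₗ[k] H →ₗ[k] A)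
    (u v : H →ₗ[k] A ⊗[k] H) : H →ₗ[k] A ⊗[k] H :=
  (TensorProduct.lift (crossedMul k A H σ f)) ∘ₗ (TensorProduct.map u v) ∘ₗ
    (Coalgebra.comul (R := k))

/-- The unit of the convolution algebra `Hom_k(H, A #_f H)`: `h ↦ ε(h) 1_E`. -/
def convOne : H →ₗ[k] A ⊗[k] H :=
  (LinearMap.toSpanSingleton k (A ⊗[k] H) (oneE k A H)) ∘ₗ (Coalgebra.counit (R := k))

/-- Sum over iterated (right-nested) Sweedler components:
`swSum n c₁ c₂ r h F = ∑ F (h⁽¹⁾, …, h⁽ʳ⁺¹⁾)`. -/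
def swSum {M : Type*} [AddCommMonoid M] (n : H → ℕ) (c₁ c₂ : H → ℕ → H) :
    (r : ℕ) → H → ((Fin (r + 1) → H) → M) → M
  | 0, h, F => F (fun _ => h)
  | (r + 1), h, F =>
      ∑ i ∈ Finset.range (n h), swSum n c₁ c₂ r (c₂ h i) (fun g => F (Fin.cons (c₁ h i) g))

/-- The product of a list of elements of the crossed product. -/
def prodE (σ : H →ₗ[k] A →ₗ[k] A) (f : H →ₗ[k] H →ₗ[k] A) :
    List (A ⊗[k] H) → A ⊗[k] H
  | [] => oneE k A H
  | x :: L => crossedMul k A H σ f x (prodE σ f L)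

end CrossedProduct

/-!
Maps out of a coalgebra into an algebra form a convolution algebra, on which coalgebra maps act by
pullback and algebra maps by pushforward. The relation `γ(h) γ(l) = f(h⁽¹⁾, l⁽¹⁾) γ(h⁽²⁾ l⁽²⁾)` is
an identity in the convolution algebra of `H ⊗ H`, equivalently `f⁻¹(h⁽¹⁾, l⁽¹⁾) γ(h⁽²⁾) γ(l⁽²⁾) =
γ(hl)`. Substituting `h = S(x⁽¹⁾)`, `l = x⁽²⁾` gives a left inverse of `γ`, which by the cocycle
condition is also a right inverse. Inverting both sides of the relation yields `γ⁻¹(h) γ⁻¹(l) =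
γ⁻¹(l⁽¹⁾ h⁽¹⁾) f⁻¹(l⁽²⁾, h⁽²⁾)`. If the values of `f` are invariant under `H`, so are those of
`f⁻¹`; they then commute with `γ` and can be collected on the left, which is the formula. All of
this happens in an associative algebra, whereas the product of `A #_f H` is given as a bare bilinear
map, so it is applied to the operators of left multiplication on `A ⊗ H`.
-/

noncomputable section

namespace HopfCrossedProduct

open Coalgebra WithConv HopfAlgebra

section Convolution

variable {k C D E R S : Type*} [CommSemiring k]
  [AddCommMonoid C] [Module k C] [Coalgebra k C] [AddCommMonoid D] [Module k D] [Coalgebra k D]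
  [AddCommMonoid E] [Module k E]
  [Semiring R] [Algebra k R] [Semiring S] [Algebra k S]

/-- Precomposition with a coalgebra homomorphism, as a homomorphism of convolution algebras. -/
def pullback (π : D →ₗc[k] C) : WithConv (C →ₗ[k] R) →* WithConv (D →ₗ[k] R) where
  toFun u := toConv (u.ofConv ∘ₗ π.toLinearMap)
  map_one' := by ext; simp
  map_mul' u v := WithConv.ext (LinearMap.convMul_comp_coalgHom_distrib u v π)

/-- Postcomposition with an algebra homomorphism, as a homomorphism of convolution algebras. -/
def pushforward (φ : R →ₐ[k] S) : WithConv (C →ₗ[k] R) →* WithConv (C →ₗ[k] S) where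
  toFun u := toConv (φ.toLinearMap ∘ₗ u.ofConv)
  map_one' := by ext; simp
  map_mul' u v := WithConv.ext (LinearMap.algHom_comp_convMul_distrib φ u v)

@[simp] lemma pullback_apply (π : D →ₗc[k] C) (u : WithConv (C →ₗ[k] R)) (d : D) :
    pullback π u d = u (π d) := rfl

@[simp] lemma pushforward_apply (φ : R →ₐ[k] S) (u : WithConv (C →ₗ[k] R)) (c : C) :
    pushforward φ u c = φ (u c) := rfl

lemma pushforward_pullback (φ : R →ₐ[k] S) (π : D →ₗc[k] C) (u : WithConv (C →ₗ[k] R)) :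
    pushforward φ (pullback π u) = pullback π (pushforward φ u) := rfl

variable (k C D) in
/-- The projection `c ⊗ d ↦ ε(d) c`. -/
def tensorFst : C ⊗[k] D →ₗc[k] C :=
  (Coalgebra.TensorProduct.rid k k C : C ⊗[k] k →ₗc[k] C).comp
    (Coalgebra.TensorProduct.map (CoalgHom.id k C) (counitCoalgHom k D))

variable (k C D) in
/-- The projection `c ⊗ d ↦ ε(c) d`. -/
def tensorSnd : C ⊗[k] D →ₗc[k] D :=
  (Coalgebra.TensorProduct.lid k D : k ⊗[k] D →ₗc[k] D).comp
    (Coalgebra.TensorProduct.map (counitCoalgHom k C) (CoalgHom.id k D))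

@[simp] lemma tensorFst_tmul (c : C) (d : D) :
    tensorFst k C D (c ⊗ₜ d) = counit (R := k) d • c := rfl

@[simp] lemma tensorSnd_tmul (c : C) (d : D) :
    tensorSnd k C D (c ⊗ₜ d) = counit (R := k) c • d := rfl

lemma sum_counit_right_smul {ι : Type*} {c : C} (r : Repr k c ι) :
    ∑ i ∈ r.index, counit (R := k) (r.right i) • r.left i = c := by
  simpa only [map_sum, TensorProduct.rid_tmul, one_smul] using
    congrArg (TensorProduct.rid k C) (sum_tmul_counit_eq r)

/-- The representation of `Δ (c ⊗ d)` obtained from representations of `Δ c` and `Δ d`. -/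
def tmulRepr {ι κ : Type*} {c : C} {d : D} (r : Repr k c ι) (s : Repr k d κ) :
    Repr k (c ⊗ₜ[k] d) (ι × κ) where
  index := r.index ×ˢ s.index
  left i := r.left i.1 ⊗ₜ s.left i.2
  right i := r.right i.1 ⊗ₜ s.right i.2
  eq := by
    simp [← r.eq, ← s.eq, TensorProduct.sum_tmul r.index, TensorProduct.tmul_sum,
      ← Finset.sum_product']

lemma convMul_apply_tmul {ι κ : Type*} {c : C} {d : D} (r : Repr k c ι) (s : Repr k d κ)
    (u v : WithConv (C ⊗[k] D →ₗ[k] R)) :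
    (u * v) (c ⊗ₜ d) = ∑ i ∈ r.index, ∑ j ∈ s.index,
      u (r.left i ⊗ₜ s.left j) * v (r.right i ⊗ₜ s.right j) :=
  ((tmulRepr r s).convMul_apply u v).trans (Finset.sum_product ..)

lemma pullback_fst_convMul_apply_tmul {ι : Type*} {c : C} (r : Repr k c ι)
    (u : WithConv (C →ₗ[k] R)) (w : WithConv (C ⊗[k] D →ₗ[k] R)) (d : D) :
    (pullback (tensorFst k C D) u * w) (c ⊗ₜ d) =
      ∑ i ∈ r.index, u (r.left i) * w (r.right i ⊗ₜ d) := by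
  conv_rhs => rw [← sum_counit_smul (ℛ k d)]
  simp [convMul_apply_tmul r (ℛ k d), tmul_sum, Finset.mul_sum]

lemma convMul_pullback_fst_apply_tmul {ι : Type*} {c : C} (r : Repr k c ι)
    (u : WithConv (C →ₗ[k] R)) (w : WithConv (C ⊗[k] D →ₗ[k] R)) (d : D) :
    (w * pullback (tensorFst k C D) u) (c ⊗ₜ d) =
      ∑ i ∈ r.index, w (r.left i ⊗ₜ d) * u (r.right i) := by
  conv_rhs => rw [← sum_counit_right_smul (ℛ k d)]
  simp [convMul_apply_tmul r (ℛ k d), tmul_sum, Finset.sum_mul]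

lemma convMul_pullback_snd_apply_tmul {κ : Type*} {d : D} (s : Repr k d κ)
    (v : WithConv (D →ₗ[k] R)) (w : WithConv (C ⊗[k] D →ₗ[k] R)) (c : C) :
    (w * pullback (tensorSnd k C D) v) (c ⊗ₜ d) =
      ∑ j ∈ s.index, w (c ⊗ₜ s.left j) * v (s.right j) := by
  conv_rhs => rw [← sum_counit_right_smul (ℛ k c)]
  rw [convMul_apply_tmul (ℛ k c) s, Finset.sum_comm]
  simp [sum_tmul, Finset.sum_mul, ← smul_tmul']

lemma pullback_fst_convMul_pullback_snd_apply_tmul (u : WithConv (C →ₗ[k] R))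
    (v : WithConv (D →ₗ[k] R)) (c : C) (d : D) :
    (pullback (tensorFst k C D) u * pullback (tensorSnd k C D) v) (c ⊗ₜ d) = u c * v d := by
  rw [pullback_fst_convMul_apply_tmul (ℛ k c)]
  conv_rhs => rw [← sum_counit_right_smul (ℛ k c)]
  simp [Finset.sum_mul]

lemma pullback_snd_convMul_pullback_fst_apply_tmul (u : WithConv (C →ₗ[k] R))
    (v : WithConv (D →ₗ[k] R)) (c : C) (d : D) :
    (pullback (tensorSnd k C D) v * pullback (tensorFst k C D) u) (c ⊗ₜ d) = v d * u c := by
  rw [convMul_pullback_fst_apply_tmul (ℛ k c)]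
  conv_rhs => rw [← sum_counit_smul (ℛ k c)]
  simp [Finset.mul_sum]

/-- The map `d ↦ w(s(d⁽¹⁾) ⊗ d⁽²⁾)`. -/
def contract (s : D →ₗ[k] E) (w : WithConv (E ⊗[k] D →ₗ[k] R)) : WithConv (D →ₗ[k] R) :=
  toConv (w.ofConv ∘ₗ LinearMap.rTensor D s ∘ₗ comul)

lemma contract_apply {ι : Type*} {d : D} (r : Repr k d ι) (s : D →ₗ[k] E)
    (w : WithConv (E ⊗[k] D →ₗ[k] R)) :
    contract s w d = ∑ i ∈ r.index, w (s (r.left i) ⊗ₜ r.right i) := by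
  simp [contract, ← r.eq]

lemma pullback_contract {D' : Type*} [AddCommMonoid D'] [Module k D'] [Coalgebra k D']
    (π : D →ₗc[k] D') (s : D' →ₗ[k] C) (w : WithConv (C ⊗[k] D' →ₗ[k] R)) :
    pullback π (contract s w) = contract (s ∘ₗ π.toLinearMap)
      (pullback (Coalgebra.TensorProduct.map (CoalgHom.id k C) π) w) := by
  ext d
  rw [pullback_apply, contract_apply ((ℛ k d).induced π), contract_apply (ℛ k d)]
  rfl

lemma contract_convMul (s : D →ₗ[k] C) (w : WithConv (C ⊗[k] D →ₗ[k] R))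
    (v : WithConv (D →ₗ[k] R)) :
    contract s w * v = contract s (w * pullback (tensorSnd k C D) v) := by
  ext d
  have reassoc := congrArg
    (LinearMap.mul' k R ∘ₗ TensorProduct.map w.ofConv v.ofConv ∘ₗ
      (TensorProduct.assoc k C D D).symm.toLinearMap ∘ₗ LinearMap.rTensor (D ⊗[k] D) s)
    (sum_tmul_tmul_eq (ℛ k d) (fun i => ℛ k ((ℛ k d).left i)) fun i => ℛ k ((ℛ k d).right i))
  simpa [(ℛ k d).convMul_apply, contract_apply (ℛ k _), Finset.sum_mul,
    convMul_pullback_snd_apply_tmul (ℛ k _)] using reassoc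

lemma contract_lTensor_comul_pullback_assoc {ι : Type*} {d : D} (r : Repr k d ι) (s : D →ₗ[k] C)
    (w : WithConv (D ⊗[k] (C ⊗[k] D) →ₗ[k] R)) :
    contract (LinearMap.lTensor D s ∘ₗ comul)
        (pullback (Coalgebra.TensorProduct.assoc k k D C D : _ →ₗc[k] _) w) d =
      ∑ i ∈ r.index, w (r.left i ⊗ₜ LinearMap.rTensor D s (comul (r.right i))) := by
  have reassoc := congrArg (w.ofConv ∘ₗ LinearMap.lTensor D (LinearMap.rTensor D s))
    (sum_tmul_tmul_eq r (fun i => ℛ k (r.left i)) fun i => ℛ k (r.right i))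
  simp only [← tmul_sum, Repr.eq] at reassoc
  simpa [contract_apply r, ← (ℛ k (r.left _)).eq, sum_tmul] using reassoc

lemma convMul_contract (u : WithConv (D →ₗ[k] R)) (s : D →ₗ[k] C)
    (w : WithConv (C ⊗[k] D →ₗ[k] R)) :
    u * contract s w = contract (LinearMap.lTensor D s ∘ₗ comul)
      (pullback (Coalgebra.TensorProduct.assoc k k D C D : _ →ₗc[k] _)
        (pullback (tensorFst k D (C ⊗[k] D)) u * pullback (tensorSnd k D (C ⊗[k] D)) w)) := by
  ext d
  simp only [contract_lTensor_comul_pullback_assoc (ℛ k d),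
    pullback_fst_convMul_pullback_snd_apply_tmul]
  exact (ℛ k d).convMul_apply _ _

end Convolution

section Hopf

variable {k H B : Type*} [CommSemiring k] [Semiring H] [HopfAlgebra k H] [Semiring B] [Algebra k B]

lemma algHom_convMul_comp_antipode (τ : H →ₐ[k] B) :
    toConv τ.toLinearMap * toConv (τ.toLinearMap ∘ₗ antipode k) = 1 := by
  have h := congrArg (pushforward τ) (LinearMap.id_mul_antipode (R := k) (C := H))
  rwa [map_mul, map_one] at h

lemma comp_antipode_convMul_algHom (τ : H →ₐ[k] B) :
    toConv (τ.toLinearMap ∘ₗ antipode k) * toConv τ.toLinearMap = 1 := by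
  have h := congrArg (pushforward τ) (LinearMap.antipode_mul_id (R := k) (C := H))
  rwa [map_mul, map_one] at h

lemma comp_antipode_eq_convMul {τ τ₁ τ₂ : H →ₐ[k] B}
    (h : toConv τ.toLinearMap = toConv τ₁.toLinearMap * toConv τ₂.toLinearMap) :
    toConv (τ.toLinearMap ∘ₗ antipode k) =
      toConv (τ₂.toLinearMap ∘ₗ antipode k) * toConv (τ₁.toLinearMap ∘ₗ antipode k) := by
  refine left_inv_eq_right_inv (comp_antipode_convMul_algHom τ) ?_
  rw [h, mul_assoc, ← mul_assoc (toConv τ₂.toLinearMap), algHom_convMul_comp_antipode, one_mul,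
    algHom_convMul_comp_antipode]

lemma comul_eq_includeLeft_convMul_includeRight :
    toConv (Bialgebra.comulAlgHom k H).toLinearMap =
      toConv (Algebra.TensorProduct.includeLeft : H →ₐ[k] H ⊗[k] H).toLinearMap *
        toConv (Algebra.TensorProduct.includeRight : H →ₐ[k] H ⊗[k] H).toLinearMap := by
  ext h
  simp [(ℛ k h).convMul_apply, (ℛ k h).eq]

/-- The representation of `Δ (S h)` obtained from one of `Δ h` by anticomultiplicativity of the
antipode. -/
def antipodeRepr {ι : Type*} {h : H} (r : Repr k h ι) : Repr k (antipode k h) ι where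
  index := r.index
  left i := antipode k (r.right i)
  right i := antipode k (r.left i)
  eq := by
    have comul_antipode := congrArg (fun w => w h)
      (comp_antipode_eq_convMul (comul_eq_includeLeft_convMul_includeRight (k := k) (H := H)))
    simpa [r.convMul_apply] using comul_antipode.symm

lemma lTensor_mul_comul_lTensor_antipode_comul (h : H) :
    LinearMap.lTensor (H ⊗[k] H) (LinearMap.mul' k H)
        (comul (LinearMap.lTensor H (antipode k) (comul h))) =
      LinearMap.lTensor H (antipode k) (comul (R := k) h) ⊗ₜ 1 := by
  let e₁₂ : H ⊗[k] H →ₐ[k] (H ⊗[k] H) ⊗[k] H := Algebra.TensorProduct.includeLeft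
  let e₁ := e₁₂.comp Algebra.TensorProduct.includeLeft
  let e₂ := e₁₂.comp Algebra.TensorProduct.includeRight
  let e₃ : H →ₐ[k] (H ⊗[k] H) ⊗[k] H := Algebra.TensorProduct.includeRight
  let e₂₃ : H →ₐ[k] (H ⊗[k] H) ⊗[k] H :=
    (Algebra.TensorProduct.map Algebra.TensorProduct.includeRight (AlgHom.id k H)).comp
      (Bialgebra.comulAlgHom k H)
  have e₂₃_eq : toConv e₂₃.toLinearMap = toConv e₂.toLinearMap * toConv e₃.toLinearMap := by
    ext h
    simp [e₂₃, e₂, e₃, e₁₂, (ℛ k h).convMul_apply, ← (ℛ k h).eq]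
  have cancel : toConv e₁.toLinearMap * toConv e₃.toLinearMap *
      toConv (e₂₃.toLinearMap ∘ₗ antipode k) =
        toConv e₁.toLinearMap * toConv (e₂.toLinearMap ∘ₗ antipode k) := by
    rw [comp_antipode_eq_convMul e₂₃_eq, mul_assoc, ← mul_assoc (toConv e₃.toLinearMap),
      algHom_convMul_comp_antipode, one_mul]
  have expand (x y : H) : LinearMap.lTensor (H ⊗[k] H) (LinearMap.mul' k H) (comul (x ⊗ₜ y)) =
      (toConv e₁.toLinearMap * toConv e₃.toLinearMap) x * e₂₃ y := by
    simp [(ℛ k x).convMul_apply, ← (tmulRepr (ℛ k x) (ℛ k y)).eq, tmulRepr, e₂₃, e₁, e₃, e₁₂,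
      ← (ℛ k y).eq, Finset.sum_mul_sum, Finset.sum_product]
  have key := congrArg (fun w => w h) cancel
  rw [(ℛ k h).convMul_apply] at key
  simp only [← (ℛ k h).eq, map_sum, LinearMap.lTensor_tmul, expand, sum_tmul]
  refine key.trans (((ℛ k h).convMul_apply _ _).trans (Finset.sum_congr rfl fun i _ => ?_))
  simp [e₁, e₂, e₁₂]

end Hopf

section CrossedSystem

variable (k H A : Type*) [CommSemiring k] [Semiring H] [Bialgebra k H] [Semiring A] [Algebra k A]

/-- A weak action of `H` on `A`, `act h a` being `a^h`: for fixed `a` the orbit map `h ↦ a^h` is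
an element of the convolution algebra `Hom(H, A)`, and `a ↦ (h ↦ a^h)` is multiplicative and
unital. -/
structure WeakAction where
  /-- The bilinear map `(h, a) ↦ a^h`. -/
  act : H →ₗ[k] A →ₗ[k] A
  act_mul (a b : A) : toConv (act.flip (a * b)) = toConv (act.flip a) * toConv (act.flip b)
  act_one : toConv (act.flip 1) = 1
  one_act (a : A) : act 1 a = a

variable {k H A}

namespace WeakAction

variable {C : Type*} [AddCommMonoid C] [Module k C] [Coalgebra k C] (W : WeakAction k H A)

/-- The orbit map `h ↦ a^h`. -/
def orbit (a : A) : WithConv (H →ₗ[k] A) := toConv (W.act.flip a)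

@[simp] lemma orbit_apply (a : A) (h : H) : W.orbit a h = W.act h a := rfl

/-- The homomorphism `Hom(C, A) → Hom(H ⊗ C, A)` of convolution algebras sending `u` to
`h ⊗ c ↦ u(c)^h`. -/
def induced : WithConv (C →ₗ[k] A) →* WithConv (H ⊗[k] C →ₗ[k] A) where
  toFun u := toConv (TensorProduct.lift W.act ∘ₗ LinearMap.lTensor H u.ofConv)
  map_one' := by
    ext h c
    have act_one := congrArg (fun w => w h) W.act_one
    simp only [LinearMap.convOne_apply, LinearMap.flip_apply] at act_one
    simp [Algebra.algebraMap_eq_smul_one, act_one, smul_smul, mul_comm]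
  map_mul' u v := by
    ext h c
    have act_mul (a b : A) : W.act h (a * b) = _ :=
      (congrArg (fun w => w h) (W.act_mul a b)).trans ((ℛ k h).convMul_apply _ _)
    have expand := convMul_apply_tmul (ℛ k h) (ℛ k c)
      (toConv (TensorProduct.lift W.act ∘ₗ LinearMap.lTensor H u.ofConv))
      (toConv (TensorProduct.lift W.act ∘ₗ LinearMap.lTensor H v.ofConv))
    refine Eq.trans ?_ expand.symm
    rw [Finset.sum_comm]
    simp [(ℛ k c).convMul_apply, act_mul]

@[simp] lemma induced_apply_tmul (u : WithConv (C →ₗ[k] A)) (h : H) (c : C) :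
    W.induced u (h ⊗ₜ c) = W.act h (u c) := rfl

end WeakAction

variable (k H) in
/-- The coalgebra homomorphism `x ⊗ y ⊗ z ↦ xy ⊗ z`. -/
def mulLeftPair : (H ⊗[k] H) ⊗[k] H →ₗc[k] H ⊗[k] H :=
  Coalgebra.TensorProduct.map (Bialgebra.mulCoalgHom k H) (CoalgHom.id k H)

variable (k H) in
/-- The coalgebra homomorphism `x ⊗ y ⊗ z ↦ x ⊗ yz`. -/
def mulRightPair : H ⊗[k] (H ⊗[k] H) →ₗc[k] H ⊗[k] H :=
  Coalgebra.TensorProduct.map (CoalgHom.id k H) (Bialgebra.mulCoalgHom k H)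

variable (k H) in
/-- The associator `(x ⊗ y) ⊗ z ↦ x ⊗ (y ⊗ z)`. -/
abbrev tensorAssoc : (H ⊗[k] H) ⊗[k] H →ₗc[k] H ⊗[k] (H ⊗[k] H) :=
  Coalgebra.TensorProduct.assoc k k H H H

@[simp] lemma mulLeftPair_tmul (x y z : H) :
    mulLeftPair k H ((x ⊗ₜ y) ⊗ₜ z) = (x * y) ⊗ₜ z := rfl

@[simp] lemma mulRightPair_tmul (x y z : H) :
    mulRightPair k H (x ⊗ₜ (y ⊗ₜ z)) = x ⊗ₜ (y * z) := rfl

/-- The representation `Δ 1 = 1 ⊗ 1`. -/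
def oneRepr : Repr k (1 : H) Unit := ⟨{()}, 1, 1, by simp [Algebra.TensorProduct.one_def]⟩

variable (k H A) in
/-- The data defining a crossed product `A #_f H` with invertible cocycle: a weak action and a
normal cocycle, a unit of the convolution algebra `Hom(H ⊗ H, A)`, satisfying conditions
(i)-(iii). -/
structure CrossedSystem extends WeakAction k H A where
  /-- The cocycle `f`. -/
  cocycle : (WithConv (H ⊗[k] H →ₗ[k] A))ˣ
  cocycle_one_left (h : H) : cocycle.val (1 ⊗ₜ h) = algebraMap k A (counit h)
  cocycle_one_right (h : H) : cocycle.val (h ⊗ₜ 1) = algebraMap k A (counit h)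
  cocycle_condition :
    pullback (tensorAssoc k H) (toWeakAction.induced cocycle.val) *
        pullback (tensorAssoc k H) (pullback (mulRightPair k H) cocycle.val) =
      pullback (tensorFst k (H ⊗[k] H) H) cocycle.val * pullback (mulLeftPair k H) cocycle.val
  twisted_module (a : A) :
    toWeakAction.induced (toWeakAction.orbit a) * cocycle.val =
      cocycle.val * pullback (Bialgebra.mulCoalgHom k H) (toWeakAction.orbit a)

lemma convMul_pullback_mulLeftPair_apply {R : Type*} [Semiring R] [Algebra k R]
    (u : WithConv ((H ⊗[k] H) ⊗[k] H →ₗ[k] R)) {w : WithConv (H ⊗[k] H →ₗ[k] R)}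
    (hw : ∀ z, w (1 ⊗ₜ z) = algebraMap k R (counit z)) {x : H ⊗[k] H}
    (hx : LinearMap.lTensor (H ⊗[k] H) (LinearMap.mul' k H) (comul x) = x ⊗ₜ 1) (z : H) :
    (u * pullback (mulLeftPair k H) w) (x ⊗ₜ z) = u (x ⊗ₜ z) := by
  rw [convMul_apply_tmul (ℛ k x) (ℛ k z), Finset.sum_comm]
  have absorb (p q : H) : ∑ i ∈ (ℛ k x).index, u ((ℛ k x).left i ⊗ₜ p) *
      w (LinearMap.mul' k H ((ℛ k x).right i) ⊗ₜ q) = counit (R := k) q • u (x ⊗ₜ p) := by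
    have eval := congrArg (LinearMap.mul' k R ∘ₗ
      TensorProduct.map (u.ofConv ∘ₗ (TensorProduct.mk k (H ⊗[k] H) H).flip p)
        (w.ofConv ∘ₗ (TensorProduct.mk k H H).flip q)) hx
    simpa [← (ℛ k x).eq, hw, ← Algebra.commutes, ← Algebra.smul_def] using eval
  calc _ = ∑ j ∈ (ℛ k z).index, counit (R := k) ((ℛ k z).right j) • u (x ⊗ₜ (ℛ k z).left j) :=
        Finset.sum_congr rfl fun j _ => absorb _ _
    _ = u (x ⊗ₜ z) := by
      conv_rhs => rw [← sum_counit_right_smul (ℛ k z)]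
      simp [tmul_sum]

namespace CrossedSystem

variable (X : CrossedSystem k H A)

/-- The map `x ⊗ y ⊗ z ↦ f⁻¹(y⁽¹⁾, z)^{x⁽¹⁾} f(x⁽²⁾, y⁽²⁾)`, by the cocycle condition equal to
`f(x⁽¹⁾, y⁽¹⁾z⁽¹⁾) f⁻¹(x⁽²⁾y⁽²⁾, z⁽²⁾)`. -/
def cocycleQuotient : WithConv ((H ⊗[k] H) ⊗[k] H →ₗ[k] A) :=
  pullback (tensorAssoc k H) (X.induced ↑X.cocycle⁻¹) *
    pullback (tensorFst k (H ⊗[k] H) H) X.cocycle.val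

lemma cocycleQuotient_mul :
    X.cocycleQuotient * pullback (mulLeftPair k H) X.cocycle.val =
      pullback (tensorAssoc k H) (pullback (mulRightPair k H) X.cocycle.val) := by
  rw [cocycleQuotient, mul_assoc, ← X.cocycle_condition, ← mul_assoc, ← map_mul,
    ← map_mul X.induced, Units.inv_mul, map_one, map_one, one_mul]

end CrossedSystem

/-- Invariance `f(x, y)^h = ε(h) f(x, y)` of the values of the cocycle under the weak action. -/
def CrossedSystem.HasInvariantCocycle (X : CrossedSystem k H A) : Prop :=
  X.induced X.cocycle.val = pullback (tensorSnd k H (H ⊗[k] H)) X.cocycle.val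

/-- A covariant representation of a crossed system in an algebra `R`: a representation of `A` and
a map `γ : H → R` satisfying the defining relations `γ(h) a = a^{h⁽¹⁾} γ(h⁽²⁾)` and
`γ(h) γ(l) = f(h⁽¹⁾, l⁽¹⁾) γ(h⁽²⁾ l⁽²⁾)` of the crossed product. -/
structure CovariantRep (X : CrossedSystem k H A) (R : Type*) [Semiring R] [Algebra k R] where
  /-- The representation of `A`. -/
  ι : A →ₐ[k] R
  /-- The map implementing the weak action. -/
  γ : WithConv (H →ₗ[k] R)
  γ_one : γ 1 = 1
  γ_mul_ι (h : H) (a : A) : γ h * ι a = (pushforward ι (X.orbit a) * γ) h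
  γ_mul_γ : pullback (tensorFst k H H) γ * pullback (tensorSnd k H H) γ =
    pushforward ι X.cocycle.val * pullback (Bialgebra.mulCoalgHom k H) γ

namespace CovariantRep

variable {C R : Type*} [AddCommMonoid C] [Module k C] [Coalgebra k C] [Semiring R] [Algebra k R]
  {X : CrossedSystem k H A} (ρ : CovariantRep X R)

lemma γ_mul_pushforward (u : WithConv (C →ₗ[k] A)) :
    pullback (tensorFst k H C) ρ.γ * pullback (tensorSnd k H C) (pushforward ρ.ι u) =
      pushforward ρ.ι (X.induced u) * pullback (tensorFst k H C) ρ.γ := by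
  ext h c
  exact (pullback_fst_convMul_pullback_snd_apply_tmul ρ.γ (pushforward ρ.ι u) h c).trans <|
    (ρ.γ_mul_ι h (u c)).trans <| ((ℛ k h).convMul_apply _ _).trans
      (convMul_pullback_fst_apply_tmul (ℛ k h) ρ.γ (pushforward ρ.ι (X.induced u)) c).symm

/-- The map `h ⊗ l ↦ f⁻¹(h⁽¹⁾, l) γ(h⁽²⁾)`, whose contraction along the antipode inverts `γ`. -/
def inverseKernel : WithConv (H ⊗[k] H →ₗ[k] R) :=
  pushforward ρ.ι ↑X.cocycle⁻¹ * pullback (tensorFst k H H) ρ.γ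

lemma inverseKernel_mul_γ :
    ρ.inverseKernel * pullback (tensorSnd k H H) ρ.γ =
      pullback (Bialgebra.mulCoalgHom k H) ρ.γ := by
  rw [inverseKernel, mul_assoc, ρ.γ_mul_γ, ← mul_assoc, ← map_mul, Units.inv_mul, map_one, one_mul]

lemma pullback_γ_mul_inverseKernel :
    pullback (tensorAssoc k H) (pullback (tensorFst k H (H ⊗[k] H)) ρ.γ *
        pullback (tensorSnd k H (H ⊗[k] H)) ρ.inverseKernel) =
      pushforward ρ.ι X.cocycleQuotient *
        pullback (mulLeftPair k H) (pullback (tensorFst k H H) ρ.γ) := by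
  have regroup (u v : WithConv (H →ₗ[k] R)) :
      pullback (tensorAssoc k H) (pullback (tensorFst k H (H ⊗[k] H)) u *
        pullback (tensorSnd k H (H ⊗[k] H)) (pullback (tensorFst k H H) v)) =
      pullback (tensorFst k (H ⊗[k] H) H)
        (pullback (tensorFst k H H) u * pullback (tensorSnd k H H) v) := by
    simp only [map_mul]
    congr 1 <;> ext x y z <;> simp [smul_smul, mul_comm]
  rw [inverseKernel, map_mul (pullback (tensorSnd k H (H ⊗[k] H))), ← mul_assoc,
    γ_mul_pushforward, mul_assoc, map_mul, regroup, γ_mul_γ]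
  simp only [CrossedSystem.cocycleQuotient, map_mul, mul_assoc]
  congr 2
  ext x y z
  simp

lemma commute_γ_cocycle_inv (hX : X.HasInvariantCocycle) (h : H) (x : H ⊗[k] H) :
    Commute (ρ.γ h) (ρ.ι (X.cocycle⁻¹.val x)) := by
  have induced_inv : X.induced ↑X.cocycle⁻¹ =
      pullback (tensorSnd k H (H ⊗[k] H)) (X.cocycle⁻¹).val :=
    congrArg (fun u => (u⁻¹).val) (Units.ext hX : Units.map X.induced X.cocycle =
      Units.map (pullback (tensorSnd k H (H ⊗[k] H))) X.cocycle)
  have comm := congrArg (fun w => w (h ⊗ₜ x)) (ρ.γ_mul_pushforward (X.cocycle⁻¹).val)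
  rw [commute_iff_eq]
  simpa only [induced_inv, pushforward_pullback, pullback_fst_convMul_pullback_snd_apply_tmul,
    pullback_snd_convMul_pullback_fst_apply_tmul, pushforward_apply] using comm

end CovariantRep

end CrossedSystem

section Inverse

variable {k H A : Type*} [CommSemiring k] [Semiring H] [HopfAlgebra k H] [Semiring A] [Algebra k A]

namespace CrossedSystem

variable (X : CrossedSystem k H A)

/-- The map `x ⊗ y ↦ f⁻¹(S(x⁽¹⁾y⁽¹⁾), x⁽²⁾y⁽²⁾) f⁻¹(x⁽³⁾, y⁽³⁾)`, which at `x = l⁽²⁾`, `y = h⁽²⁾` is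
the coefficient of `γ(S(l⁽¹⁾h⁽¹⁾))` in `γ⁻¹(h) γ⁻¹(l)`. -/
def invKernel : WithConv (H ⊗[k] H →ₗ[k] A) :=
  contract (antipode k ∘ₗ LinearMap.mul' k H)
    (pullback (mulRightPair k H) ↑X.cocycle⁻¹ * pullback (tensorSnd k H (H ⊗[k] H)) ↑X.cocycle⁻¹)

lemma pullback_contract_mul :
    pullback (Bialgebra.mulCoalgHom k H) (contract (antipode k) (X.cocycle⁻¹).val) *
      (X.cocycle⁻¹).val = X.invKernel := by
  rw [pullback_contract, contract_convMul]
  rfl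

lemma invKernel_apply_tmul {κ : Type*} (r : ∀ h : H, Repr k h κ) (x y : H) :
    X.invKernel (x ⊗ₜ y) =
      ∑ j ∈ (r x).index, ∑ t ∈ (r y).index,
        ∑ p ∈ (r ((r x).right j)).index, ∑ s ∈ (r ((r y).right t)).index,
          X.cocycle⁻¹.val (antipode k ((r x).left j * (r y).left t) ⊗ₜ
              ((r ((r x).right j)).left p * (r ((r y).right t)).left s)) *
            X.cocycle⁻¹.val ((r ((r x).right j)).right p ⊗ₜ (r ((r y).right t)).right s) := by
  rw [invKernel, contract_apply (tmulRepr (r x) (r y))]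
  simp only [convMul_pullback_snd_apply_tmul (tmulRepr (r _) (r _)), tmulRepr,
    Finset.sum_product]
  rfl

end CrossedSystem

namespace CovariantRep

variable {R : Type*} [Semiring R] [Algebra k R] {X : CrossedSystem k H A} (ρ : CovariantRep X R)

/-- The convolution inverse `h ↦ f⁻¹(S(h⁽¹⁾)⁽¹⁾, h⁽²⁾) γ(S(h⁽¹⁾)⁽²⁾)`. -/
def γInv : WithConv (H →ₗ[k] R) := contract (antipode k) ρ.inverseKernel

lemma γInv_mul_γ : ρ.γInv * ρ.γ = 1 := by
  rw [γInv, contract_convMul, inverseKernel_mul_γ]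
  ext h
  change ρ.γ (LinearMap.mul' k H (LinearMap.rTensor H (antipode k) (comul h))) = _
  simp [mul_antipode_rTensor_comul_apply, Algebra.algebraMap_eq_smul_one, ρ.γ_one]

lemma γ_mul_γInv : ρ.γ * ρ.γInv = 1 := by
  rw [γInv, convMul_contract, pullback_γ_mul_inverseKernel]
  let F := pushforward ρ.ι X.cocycle.val
  have F_one (z : H) : F (1 ⊗ₜ z) = algebraMap k R (counit z) := by
    rw [pushforward_apply, X.cocycle_one_left, AlgHom.commutes]
  have γ_fst_one (z : H) : pullback (tensorFst k H H) ρ.γ (1 ⊗ₜ z) = algebraMap k R (counit z) := by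
    simp [ρ.γ_one, Algebra.algebraMap_eq_smul_one]
  have quotient_mul : pushforward ρ.ι X.cocycleQuotient * pullback (mulLeftPair k H) F =
      pullback (tensorAssoc k H) (pullback (mulRightPair k H) F) := by
    simp only [F, ← pushforward_pullback, ← map_mul, X.cocycleQuotient_mul]
  ext h
  calc _ = contract (LinearMap.lTensor H (antipode k) ∘ₗ comul)
        (pullback (tensorAssoc k H) (pullback (mulRightPair k H) F)) h := by
        simp only [contract_apply (ℛ k h), ← quotient_mul, LinearMap.comp_apply]
        refine Finset.sum_congr rfl fun i _ => ?_
        have absorbable := lTensor_mul_comul_lTensor_antipode_comul (k := k) ((ℛ k h).left i)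
        rw [convMul_pullback_mulLeftPair_apply _ γ_fst_one absorbable,
          convMul_pullback_mulLeftPair_apply _ F_one absorbable]
    _ = (1 : WithConv (H →ₗ[k] R)) h := by
        rw [contract_lTensor_comul_pullback_assoc (ℛ k h)]
        have mulRightPair_apply (x : H) (t : H ⊗[k] H) :
            mulRightPair k H (x ⊗ₜ t) = x ⊗ₜ LinearMap.mul' k H t := rfl
        have F_right (i) : F ((ℛ k h).left i ⊗ₜ algebraMap k H (counit ((ℛ k h).right i))) =
            algebraMap k R (counit (counit (R := k) ((ℛ k h).right i) • (ℛ k h).left i)) := by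
          simp [F, Algebra.algebraMap_eq_smul_one, X.cocycle_one_right, mul_smul]
        simp only [pullback_apply, mulRightPair_apply, mul_antipode_rTensor_comul_apply, F_right,
          ← map_sum, sum_counit_right_smul, LinearMap.convOne_apply]

/-- `γ` as a unit of the convolution algebra. -/
def γUnit : (WithConv (H →ₗ[k] R))ˣ := ⟨ρ.γ, ρ.γInv, ρ.γ_mul_γInv, ρ.γInv_mul_γ⟩

lemma pullback_γInv_mul_pullback_γInv :
    pullback (tensorSnd k H H) ρ.γInv * pullback (tensorFst k H H) ρ.γInv =
      pullback (Bialgebra.mulCoalgHom k H) ρ.γInv * pushforward ρ.ι ↑X.cocycle⁻¹ := by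
  have γ_mul_γ : Units.map (pullback (tensorFst k H H)) ρ.γUnit *
      Units.map (pullback (tensorSnd k H H)) ρ.γUnit =
        Units.map (pushforward ρ.ι) X.cocycle *
          Units.map (pullback (Bialgebra.mulCoalgHom k H)) ρ.γUnit := Units.ext ρ.γ_mul_γ
  have inv_eq_inv := congrArg Inv.inv γ_mul_γ
  rw [mul_inv_rev, mul_inv_rev] at inv_eq_inv
  exact congrArg Units.val inv_eq_inv

lemma γInv_apply {κ : Type*} {h : H} (r : Repr k h κ) :
    ρ.γInv h = ∑ i ∈ r.index,
      ρ.ι (contract (antipode k) (X.cocycle⁻¹).val (r.right i)) * ρ.γ (antipode k (r.left i)) := by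
  have reassoc := congrArg
    (LinearMap.mul' k R ∘ₗ (TensorProduct.comm k R R).toLinearMap ∘ₗ
      TensorProduct.map (ρ.γ.ofConv ∘ₗ antipode k)
        ((pushforward ρ.ι ↑X.cocycle⁻¹).ofConv ∘ₗ LinearMap.rTensor H (antipode k)))
    (sum_tmul_tmul_eq r (fun i => ℛ k (r.left i)) fun i => ℛ k (r.right i))
  rw [γInv, contract_apply r]
  simp only [inverseKernel, convMul_pullback_fst_apply_tmul (antipodeRepr (ℛ k (r.left _))),
    contract_apply (ℛ k (r.right _))]
  simpa [antipodeRepr, Finset.sum_mul] using reassoc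

lemma γInv_eq_convMul (hX : X.HasInvariantCocycle) :
    ρ.γInv = toConv (ρ.γ.ofConv ∘ₗ antipode k) *
      pushforward ρ.ι (contract (antipode k) (X.cocycle⁻¹).val) := by
  ext h
  rw [(ℛ k h).convMul_apply, ρ.γInv_apply (ℛ k h)]
  refine Finset.sum_congr rfl fun i _ => ?_
  simp only [contract_apply (ℛ k ((ℛ k h).right i)), pushforward_apply, map_sum]
  exact (Commute.sum_right _ _ _ fun j _ => ρ.commute_γ_cocycle_inv hX _ _).symm.eq

lemma pullback_γInv_mul_pullback_γInv_of_invariant (hX : X.HasInvariantCocycle) :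
    pullback (tensorSnd k H H) ρ.γInv * pullback (tensorFst k H H) ρ.γInv =
      pullback (Bialgebra.mulCoalgHom k H) (toConv (ρ.γ.ofConv ∘ₗ antipode k)) *
        pushforward ρ.ι X.invKernel := by
  rw [pullback_γInv_mul_pullback_γInv, γInv_eq_convMul ρ hX, map_mul, mul_assoc,
    ← X.pullback_contract_mul, map_mul, pushforward_pullback]

lemma γInv_mul_γInv_apply (hX : X.HasInvariantCocycle) {κ : Type*} (r : ∀ h : H, Repr k h κ)
    (h l : H) :
    ρ.γInv h * ρ.γInv l = ∑ i ∈ (r l).index, ∑ q ∈ (r h).index,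
      ρ.ι (X.invKernel ((r l).right i ⊗ₜ (r h).right q)) *
        ρ.γ (antipode k ((r l).left i * (r h).left q)) := by
  rw [← pullback_snd_convMul_pullback_fst_apply_tmul,
    ρ.pullback_γInv_mul_pullback_γInv_of_invariant hX, convMul_apply_tmul (r l) (r h)]
  refine Finset.sum_congr rfl fun i _ => Finset.sum_congr rfl fun q _ => ?_
  rw [pushforward_apply, X.invKernel_apply_tmul r]
  simp only [map_sum, map_mul]
  exact (Commute.sum_right _ _ _ fun _ _ => Commute.sum_right _ _ _ fun _ _ =>
    Commute.sum_right _ _ _ fun _ _ => Commute.sum_right _ _ _ fun _ _ =>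
      (ρ.commute_γ_cocycle_inv hX _ _).mul_right (ρ.commute_γ_cocycle_inv hX _ _)).eq

end CovariantRep

end Inverse

section RegularRepresentation

variable {k H A : Type*} [CommRing k] [Ring H] [HopfAlgebra k H] [Ring A] [Algebra k A]
  (X : CrossedSystem k H A)

local notation "inL" => (Algebra.TensorProduct.includeLeft : A →ₐ[k] A ⊗[k] H)
local notation "inR" => (Algebra.TensorProduct.includeRight : H →ₐ[k] A ⊗[k] H)

namespace CrossedSystem

/-- Multiplication of the crossed product `A #_f H`. -/
def mul : A ⊗[k] H →ₗ[k] A ⊗[k] H →ₗ[k] A ⊗[k] H :=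
  crossedMul k A H X.act (TensorProduct.curry X.cocycle.val.ofConv)

/-- The map `h ⊗ l ↦ f(h⁽¹⁾, l⁽¹⁾) # h⁽²⁾l⁽²⁾`, which is `h ⊗ l ↦ γ(h) γ(l)`. -/
def gammaMul : WithConv (H ⊗[k] H →ₗ[k] A ⊗[k] H) :=
  pushforward inL X.cocycle.val *
    pushforward inR (pullback (Bialgebra.mulCoalgHom k H) (toConv LinearMap.id))

lemma mul_tmul_tmul (a b : A) (h l : H) :
    X.mul (a ⊗ₜ h) (b ⊗ₜ l) =
      inL a * (pushforward inL (pullback (tensorFst k H H) (X.orbit b)) * X.gammaMul) (h ⊗ₜ l) := by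
  rw [gammaMul, ← mul_assoc, ← map_mul, convMul_apply_tmul (ℛ k h) (ℛ k l)]
  simp only [pushforward_apply, pullback_fst_convMul_apply_tmul (ℛ k ((ℛ k h).left _))]
  simp only [mul, crossedMul, ← (ℛ k h).eq, ← (ℛ k l).eq, ← (ℛ k ((ℛ k h).left _)).eq,
    lift.tmul, LinearMap.compl₂_apply, LinearMap.comp_apply, LinearMap.llcomp_apply, curry_apply,
    map_tmul, map_sum, LinearMap.rTensor_tmul, LinearMap.lTensor_tmul, sum_tmul, tmul_sum,
    LinearEquiv.coe_coe, tensorTensorTensorComm_tmul, assoc_symm_tmul, LinearMap.mul'_apply]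
  rw [Finset.sum_comm]
  simp [Finset.mul_sum, Finset.sum_mul]

lemma mul_one_tmul_convMul {C : Type*} [AddCommMonoid C] [Module k C] [Coalgebra k C]
    (u : WithConv (C →ₗ[k] A)) (ψ : C →ₗc[k] H) (h : H) (c : C) :
    X.mul (1 ⊗ₜ h) ((pushforward inL u * pushforward inR (toConv ψ.toLinearMap)) c) =
      (pushforward inL (X.induced u) *
        pullback (Coalgebra.TensorProduct.map (CoalgHom.id k H) ψ) X.gammaMul) (h ⊗ₜ c) := by
  rw [convMul_apply_tmul (ℛ k h) (ℛ k c), (ℛ k c).convMul_apply, map_sum, Finset.sum_comm]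
  refine Finset.sum_congr rfl fun i _ => ?_
  have pure_tensor : pushforward inL u ((ℛ k c).left i) *
      pushforward inR (toConv ψ.toLinearMap) ((ℛ k c).right i) =
        u ((ℛ k c).left i) ⊗ₜ ψ ((ℛ k c).right i) := by
    simp
  rw [pure_tensor, mul_tmul_tmul, map_one, one_mul, pushforward_pullback,
    pullback_fst_convMul_apply_tmul (ℛ k h)]
  rfl

lemma mul_tmul_eq (a : A) (h : H) (x : A ⊗[k] H) :
    X.mul (a ⊗ₜ h) x = inL a * X.mul (1 ⊗ₜ h) x := by
  induction x using TensorProduct.induction_on with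
  | zero => simp
  | tmul b l => rw [mul_tmul_tmul, mul_tmul_tmul, map_one, one_mul]
  | add x y hx hy => rw [map_add, map_add, hx, hy, mul_add]

lemma gammaMul_one_tmul (l : H) : X.gammaMul (1 ⊗ₜ l) = 1 ⊗ₜ l := by
  rw [gammaMul, convMul_apply_tmul oneRepr (ℛ k l)]
  conv_rhs => rw [← sum_counit_smul (ℛ k l)]
  simp [oneRepr, X.cocycle_one_left, tmul_sum, Algebra.algebraMap_eq_smul_one]

lemma gammaMul_tmul_one (h : H) : X.gammaMul (h ⊗ₜ 1) = 1 ⊗ₜ h := by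
  rw [gammaMul, convMul_apply_tmul (ℛ k h) oneRepr]
  conv_rhs => rw [← sum_counit_smul (ℛ k h)]
  simp [oneRepr, X.cocycle_one_right, tmul_sum, Algebra.algebraMap_eq_smul_one]

protected lemma one_mul (x : A ⊗[k] H) : X.mul (1 ⊗ₜ 1) x = x := by
  induction x using TensorProduct.induction_on with
  | zero => simp
  | tmul b l =>
    rw [mul_tmul_tmul, pushforward_pullback, pullback_fst_convMul_apply_tmul oneRepr]
    simp [oneRepr, X.one_act, gammaMul_one_tmul]
  | add x y hx hy => rw [map_add, hx, hy]

protected lemma mul_one (x : A ⊗[k] H) : X.mul x (1 ⊗ₜ 1) = x := by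
  have orbit_one : X.orbit 1 = 1 := X.act_one
  induction x using TensorProduct.induction_on with
  | zero => simp
  | tmul a h =>
    rw [mul_tmul_tmul, orbit_one, map_one, map_one, one_mul, gammaMul_tmul_one]
    simp
  | add x y hx hy => rw [map_add, LinearMap.add_apply, hx, hy]

lemma induced_orbit_mul_cocycle (c : A) :
    pullback (tensorAssoc k H) (X.induced (pullback (tensorFst k H H) (X.orbit c) *
        X.cocycle.val) * pullback (mulRightPair k H) X.cocycle.val) =
      pullback (tensorFst k (H ⊗[k] H) H) X.cocycle.val * pullback (mulLeftPair k H)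
        (pullback (tensorFst k H H) (X.orbit c) * X.cocycle.val) := by
  have orbit_assoc : pullback (tensorAssoc k H)
      (X.induced (pullback (tensorFst k H H) (X.orbit c))) =
      pullback (tensorFst k (H ⊗[k] H) H) (X.induced (X.orbit c)) := by
    ext x y z
    simp
  have orbit_mul : pullback (tensorFst k (H ⊗[k] H) H)
      (pullback (Bialgebra.mulCoalgHom k H) (X.orbit c)) =
      pullback (mulLeftPair k H) (pullback (tensorFst k H H) (X.orbit c)) := by
    ext x y z
    simp
  rw [map_mul X.induced, map_mul, map_mul, orbit_assoc, mul_assoc, X.cocycle_condition,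
    ← mul_assoc, ← map_mul, X.twisted_module, map_mul, orbit_mul, map_mul, mul_assoc]

lemma mul_one_tmul_mul_one_tmul_tmul (h l m : H) (c : A) :
    X.mul (1 ⊗ₜ h) (X.mul (1 ⊗ₜ l) (c ⊗ₜ m)) =
      (pullback (tensorFst k (H ⊗[k] H) H) (pushforward inL X.cocycle.val) *
        pullback (mulLeftPair k H)
          (pushforward inL (pullback (tensorFst k H H) (X.orbit c)) * X.gammaMul))
        ((h ⊗ₜ l) ⊗ₜ m) := by
  let mulH := Bialgebra.mulCoalgHom k H
  let mul₂ := pushforward inR (pullback mulH (toConv LinearMap.id))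
  have mul₂_assoc : pullback (tensorAssoc k H) (pullback (mulRightPair k H) mul₂) =
      pullback (mulLeftPair k H) mul₂ := by
    ext x y z
    simp [mul₂, mulH, mul_assoc]
  have triple : pullback (tensorAssoc k H) (pushforward inL (X.induced
        (pullback (tensorFst k H H) (X.orbit c) * X.cocycle.val)) *
          pullback (mulRightPair k H) X.gammaMul) =
      pullback (tensorFst k (H ⊗[k] H) H) (pushforward inL X.cocycle.val) *
        pullback (mulLeftPair k H)
          (pushforward inL (pullback (tensorFst k H H) (X.orbit c)) * X.gammaMul) := by
    calc _ = pushforward inL (pullback (tensorAssoc k H)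
            (X.induced (pullback (tensorFst k H H) (X.orbit c) * X.cocycle.val) *
              pullback (mulRightPair k H) X.cocycle.val)) *
          pullback (tensorAssoc k H) (pullback (mulRightPair k H) mul₂) := by
          simp only [gammaMul, map_mul, mul_assoc, pushforward_pullback, mul₂, mulH]
      _ = pushforward inL (pullback (tensorFst k (H ⊗[k] H) H) X.cocycle.val *
            pullback (mulLeftPair k H)
              (pullback (tensorFst k H H) (X.orbit c) * X.cocycle.val)) *
          pullback (mulLeftPair k H) mul₂ := by
          rw [X.induced_orbit_mul_cocycle, mul₂_assoc]
      _ = _ := by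
          simp only [gammaMul, map_mul, mul_assoc, pushforward_pullback, mul₂, mulH]
  rw [← triple, mul_tmul_tmul, map_one, one_mul, gammaMul, ← mul_assoc, ← map_mul]
  exact X.mul_one_tmul_convMul _ mulH h (l ⊗ₜ m)

lemma mul_one_tmul_includeLeft_mul {κ : Type*} {h : H} (r : Repr k h κ) (a : A) (x : A ⊗[k] H) :
    X.mul (1 ⊗ₜ h) (inL a * x) =
      ∑ i ∈ r.index, inL (X.act (r.left i) a) * X.mul (1 ⊗ₜ r.right i) x := by
  have orbit_mul (b : A) : X.orbit (a * b) = X.orbit a * X.orbit b := X.act_mul a b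
  induction x using TensorProduct.induction_on with
  | zero => simp
  | tmul b l =>
    rw [Algebra.TensorProduct.includeLeft_apply, Algebra.TensorProduct.tmul_mul_tmul, one_mul,
      mul_tmul_tmul, map_one, one_mul, orbit_mul, map_mul, map_mul, mul_assoc, pushforward_pullback,
      pullback_fst_convMul_apply_tmul r]
    simp only [mul_tmul_tmul, map_one, one_mul, pushforward_apply, WeakAction.orbit_apply]
  | add x y hx hy => simp only [mul_add, map_add, hx, hy, Finset.sum_add_distrib]

lemma mul_one_tmul_mul_one_tmul {κ κ' : Type*} {h l : H} (r : Repr k h κ) (s : Repr k l κ')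
    (x : A ⊗[k] H) :
    X.mul (1 ⊗ₜ h) (X.mul (1 ⊗ₜ l) x) = ∑ i ∈ r.index, ∑ j ∈ s.index,
      inL (X.cocycle.val (r.left i ⊗ₜ s.left j)) * X.mul (1 ⊗ₜ (r.right i * s.right j)) x := by
  induction x using TensorProduct.induction_on with
  | zero => simp
  | tmul c m =>
    rw [mul_one_tmul_mul_one_tmul_tmul, pullback_fst_convMul_apply_tmul (tmulRepr r s)]
    simp only [tmulRepr, Finset.sum_product, pushforward_apply, pullback_apply, mulLeftPair_tmul,
      mul_tmul_tmul, map_one, one_mul]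
  | add x y hx hy => simp only [mul_add, map_add, hx, hy, Finset.sum_add_distrib]

end CrossedSystem

namespace CovariantRep

/-- The left regular representation of the crossed product on itself. -/
def regular : CovariantRep X (Module.End k (A ⊗[k] H)) where
  ι := (Algebra.lmul k (A ⊗[k] H)).comp inL
  γ := toConv (X.mul ∘ₗ TensorProduct.mk k A H 1)
  γ_one := LinearMap.ext X.one_mul
  γ_mul_ι h a := by
    rw [(ℛ k h).convMul_apply]
    refine LinearMap.ext fun x => ?_
    rw [LinearMap.sum_apply]
    exact X.mul_one_tmul_includeLeft_mul (ℛ k h) a x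
  γ_mul_γ := by
    refine WithConv.ext (TensorProduct.ext' fun h l => ?_)
    refine (pullback_fst_convMul_pullback_snd_apply_tmul _ _ h l).trans <|
      Eq.trans ?_ (convMul_apply_tmul (ℛ k h) (ℛ k l) _ _).symm
    refine LinearMap.ext fun x => ?_
    simp only [LinearMap.sum_apply]
    exact X.mul_one_tmul_mul_one_tmul (ℛ k h) (ℛ k l) x

end CovariantRep

namespace CrossedSystem

open CovariantRep

lemma mul_tmul (a : A) (h : H) : X.mul (a ⊗ₜ h) = (regular X).ι a * (regular X).γ h :=
  LinearMap.ext (X.mul_tmul_eq a h)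

lemma mul_gammaInv (h : H) :
    X.mul (gammaInv k A H (TensorProduct.curry (X.cocycle⁻¹).val.ofConv) h) =
      (regular X).γInv h := by
  have lift_curry : TensorProduct.lift (TensorProduct.curry (X.cocycle⁻¹).val.ofConv) =
      (X.cocycle⁻¹).val.ofConv := TensorProduct.ext' fun _ _ => rfl
  rw [(regular X).γInv_apply (ℛ k h)]
  simp only [gammaInv, lift_curry, LinearMap.comp_apply, ← (ℛ k h).eq, map_sum]
  exact Finset.sum_congr rfl fun i _ => X.mul_tmul
    (contract (antipode k) (X.cocycle⁻¹).val ((ℛ k h).right i)) (antipode k ((ℛ k h).left i))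

lemma mul_gammaInv_gammaInv (hX : X.HasInvariantCocycle) {κ : Type*} (r : ∀ h : H, Repr k h κ)
    (h l : H) :
    X.mul (gammaInv k A H (TensorProduct.curry (X.cocycle⁻¹).val.ofConv) h)
        (gammaInv k A H (TensorProduct.curry (X.cocycle⁻¹).val.ofConv) l) =
      ∑ i ∈ (r l).index, ∑ q ∈ (r h).index,
        X.invKernel ((r l).right i ⊗ₜ (r h).right q) ⊗ₜ
          antipode k ((r l).left i * (r h).left q) := by
  have product := LinearMap.congr_fun ((regular X).γInv_mul_γInv_apply hX r h l) (1 ⊗ₜ 1)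
  simpa only [← mul_gammaInv, ← mul_tmul, Module.End.mul_apply, LinearMap.sum_apply,
    X.mul_one] using product

end CrossedSystem

end RegularRepresentation

section Sweedler

variable {k H A : Type*} [CommRing k] [Ring H] [HopfAlgebra k H] [Ring A] [Algebra k A]
  {σ : H →ₗ[k] A →ₗ[k] A} {f finv : H →ₗ[k] H →ₗ[k] A} {n : H → ℕ} {c₁ c₂ : H → ℕ → H}
  (hrep : IsSweedlerRep k H n c₁ c₂)

/-- The representations of `Δ h` chosen by a Sweedler representation. -/
@[simps] def sweedlerRepr (h : H) : Repr k h ℕ := ⟨Finset.range (n h), c₁ h, c₂ h, (hrep h).symm⟩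

/-- The weak action given by a bilinear map satisfying the axioms in Sweedler form. -/
def WeakAction.ofSweedler (hweak : IsWeakAction k A H n c₁ c₂ σ) : WeakAction k H A where
  act := σ
  act_mul a b := by
    ext h
    simpa [(sweedlerRepr hrep h).convMul_apply] using hweak.1 h a b
  act_one := by
    ext h
    simpa [Algebra.algebraMap_eq_smul_one] using hweak.2.1 h
  one_act := hweak.2.2

/-- The convolution inverse pair `f`, `f⁻¹` as a unit. -/
def cocycleUnit (hinv : IsConvInverse k A H n c₁ c₂ f finv) : (WithConv (H ⊗[k] H →ₗ[k] A))ˣ where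
  val := toConv (TensorProduct.lift f)
  inv := toConv (TensorProduct.lift finv)
  val_inv := by
    refine WithConv.ext (TensorProduct.ext' fun h l => ?_)
    refine (convMul_apply_tmul (sweedlerRepr hrep h) (sweedlerRepr hrep l) _ _).trans ?_
    simpa [Algebra.algebraMap_eq_smul_one, mul_comm] using (hinv h l).1
  inv_val := by
    refine WithConv.ext (TensorProduct.ext' fun h l => ?_)
    refine (convMul_apply_tmul (sweedlerRepr hrep h) (sweedlerRepr hrep l) _ _).trans ?_
    simpa [Algebra.algebraMap_eq_smul_one, mul_comm] using (hinv h l).2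

/-- The crossed system given by a weak action and an invertible cocycle satisfying conditions
(i)-(iii) in Sweedler form. -/
def CrossedSystem.ofSweedler (hweak : IsWeakAction k A H n c₁ c₂ σ) (hnormal : IsNormal k A H f)
    (hcocycle : IsCocycle k A H n c₁ c₂ σ f) (htwisted : IsTwistedModule k A H n c₁ c₂ σ f)
    (hinv : IsConvInverse k A H n c₁ c₂ f finv) : CrossedSystem k H A where
  toWeakAction := WeakAction.ofSweedler hrep hweak
  cocycle := cocycleUnit hrep hinv
  cocycle_one_left h := (hnormal h).2.trans (Algebra.algebraMap_eq_smul_one _).symm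
  cocycle_one_right h := (hnormal h).1.trans (Algebra.algebraMap_eq_smul_one _).symm
  cocycle_condition := by
    refine WithConv.ext (TensorProduct.ext_threefold fun h l m => ?_)
    rw [← map_mul]
    refine (convMul_apply_tmul (sweedlerRepr hrep h)
      (tmulRepr (sweedlerRepr hrep l) (sweedlerRepr hrep m)) _ _).trans ?_
    refine Eq.trans ?_ (pullback_fst_convMul_apply_tmul
      (tmulRepr (sweedlerRepr hrep h) (sweedlerRepr hrep l)) _ _ m).symm
    simp only [tmulRepr, Finset.sum_product, sweedlerRepr_index, sweedlerRepr_left,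
      sweedlerRepr_right]
    exact hcocycle h l m
  twisted_module a := by
    refine WithConv.ext (TensorProduct.ext' fun h l => ?_)
    refine (convMul_apply_tmul (sweedlerRepr hrep h) (sweedlerRepr hrep l) _ _).trans <|
      Eq.trans ?_ (convMul_apply_tmul (sweedlerRepr hrep h) (sweedlerRepr hrep l) _ _).symm
    exact htwisted h l a

end Sweedler

end HopfCrossedProduct

end

open HopfCrossedProduct in
theorem gammaInv_mul_gammaInv_general
    (k A H : Type*) [CommRing k] [Ring A] [Algebra k A] [Ring H] [HopfAlgebra k H]
    (σ : H →ₗ[k] A →ₗ[k] A) (f finv : H →ₗ[k] H →ₗ[k] A)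
    (n : H → ℕ) (c₁ c₂ : H → ℕ → H)
    (hrep : IsSweedlerRep k H n c₁ c₂)
    (hweak : IsWeakAction k A H n c₁ c₂ σ)
    (hnormal : IsNormal k A H f)
    (hcocycle : IsCocycle k A H n c₁ c₂ σ f)
    (htwisted : IsTwistedModule k A H n c₁ c₂ σ f)
    (hinv : IsConvInverse k A H n c₁ c₂ f finv)
    (hinvariant : ∀ h x y : H, σ h (f x y) = Coalgebra.counit (R := k) h • f x y) :
    ∀ h l : H,
      crossedMul k A H σ f (gammaInv k A H finv h) (gammaInv k A H finv l) =
        ∑ i ∈ Finset.range (n l), ∑ j ∈ Finset.range (n (c₂ l i)),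
          ∑ p ∈ Finset.range (n (c₂ (c₂ l i) j)),
            ∑ q ∈ Finset.range (n h), ∑ r ∈ Finset.range (n (c₂ h q)),
              ∑ s ∈ Finset.range (n (c₂ (c₂ h q) r)),
                (finv (HopfAlgebra.antipode (R := k) (c₁ (c₂ l i) j * c₁ (c₂ h q) r))
                      (c₁ (c₂ (c₂ l i) j) p * c₁ (c₂ (c₂ h q) r) s) *
                    finv (c₂ (c₂ (c₂ l i) j) p) (c₂ (c₂ (c₂ h q) r) s)) ⊗ₜ[k]
                  HopfAlgebra.antipode (R := k) (c₁ l i * c₁ h q) := by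
  intro h l
  let X := CrossedSystem.ofSweedler hrep hweak hnormal hcocycle htwisted hinv
  have invariant : X.HasInvariantCocycle :=
    WithConv.ext <| TensorProduct.ext <| LinearMap.ext fun h => TensorProduct.ext' fun x y =>
      (hinvariant h x y).trans (map_smul (TensorProduct.lift f) (Coalgebra.counit h) (x ⊗ₜ y)).symm
  refine (X.mul_gammaInv_gammaInv invariant (sweedlerRepr hrep) h l).trans ?_
  simp only [X.invKernel_apply_tmul (sweedlerRepr hrep), sweedlerRepr_index, sweedlerRepr_left,
    sweedlerRepr_right, sum_tmul]
  refine Finset.sum_congr rfl fun i _ => ?_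
  rw [Finset.sum_comm]
  refine Finset.sum_congr rfl fun j _ => ?_
  refine Eq.trans (Finset.sum_congr rfl fun q _ => Finset.sum_comm) ?_
  exact Finset.sum_comm

/-- If moreover `f` (hence `f⁻¹`) takes its values in `k·1_A`, then in
`E = A #_f H` one has
`γ⁻¹(h) γ⁻¹(l) = f⁻¹(S(l⁽²⁾h⁽²⁾), l⁽³⁾h⁽³⁾) f⁻¹(l⁽⁴⁾, h⁽⁴⁾) γ(S(l⁽¹⁾h⁽¹⁾))`. -/
theorem gammaInv_mul_gammaInv
    (k A H : Type*) [CommRing k] [Ring A] [Algebra k A] [Ring H] [HopfAlgebra k H]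
    (σ : H →ₗ[k] A →ₗ[k] A) (f finv : H →ₗ[k] H →ₗ[k] A)
    (n : H → ℕ) (c₁ c₂ : H → ℕ → H)
    (hrep : IsSweedlerRep k H n c₁ c₂)
    (hweak : IsWeakAction k A H n c₁ c₂ σ)
    (hnormal : IsNormal k A H f)
    (hcocycle : IsCocycle k A H n c₁ c₂ σ f)
    (htwisted : IsTwistedModule k A H n c₁ c₂ σ f)
    (hinv : IsConvInverse k A H n c₁ c₂ f finv)
    (hfk : ∀ h l : H, ∃ c : k, f h l = c • (1 : A)) :
    ∀ h l : H,
      crossedMul k A H σ f (gammaInv k A H finv h) (gammaInv k A H finv l) =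
        ∑ i ∈ Finset.range (n l), ∑ j ∈ Finset.range (n (c₂ l i)),
          ∑ p ∈ Finset.range (n (c₂ (c₂ l i) j)),
            ∑ q ∈ Finset.range (n h), ∑ r ∈ Finset.range (n (c₂ h q)),
              ∑ s ∈ Finset.range (n (c₂ (c₂ h q) r)),
                (finv (HopfAlgebra.antipode (R := k) (c₁ (c₂ l i) j * c₁ (c₂ h q) r))
                      (c₁ (c₂ (c₂ l i) j) p * c₁ (c₂ (c₂ h q) r) s) *
                    finv (c₂ (c₂ (c₂ l i) j) p) (c₂ (c₂ (c₂ h q) r) s)) ⊗ₜ[k]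
                  HopfAlgebra.antipode (R := k) (c₁ l i * c₁ h q) :=
  gammaInv_mul_gammaInv_general k A H σ f finv n c₁ c₂ hrep hweak hnormal hcocycle htwisted hinv
    fun h x y => by
      obtain ⟨c, hc⟩ := hfk x y
      rw [hc, map_smul, hweak.2.1, smul_comm]
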